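/- arXiv:1009.5375 — 4 statements merged into one kernel-verified Lean document; each statement's English description precedes it below -/
import Mathlib

section
/- Let p be an odd prime. Then ∑_{1 ≤ k ≤ p-1, k ≡ 2 (mod 4)} H_k/k ≡ (3/16)·q_p(2)² (mod p), where q_p(2) = (2^{p-1} − 1)/p. -/
/-- `H n` is the harmonic number `∑_{k=1}^n 1/k`. -/
def H (n : ℕ) : ℚ := ∑ k ∈ Finset.Icc 1 n, (1 : ℚ) / k

/-- `H2 n` is the second-order harmonic number `∑_{k=1}^n 1/k²`. -/
def H2 (n : ℕ) : ℚ := ∑ k ∈ Finset.Icc 1 n, (1 : ℚ) / k ^ 2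

/-- The Euler numbers: `E 0 = 1` and `∑_{0 ≤ k ≤ n, k even} C(n,k) E_{n-k} = 0` for `n ≥ 1`. -/
def eulerNumber : ℕ → ℚ
  | 0 => 1
  | n + 1 =>
      -∑ j ∈ (Finset.range (n + 1)).attach,
        if Even (n + 1 - j.1) then ((n + 1).choose (n + 1 - j.1) : ℚ) * eulerNumber j.1 else 0
decreasing_by exact Finset.mem_range.mp j.2

/-- For rationals, `a ≡ b (mod m)` : `m` divides the numerator of `a - b` in lowest terms. -/
def ratModEq (m : ℕ) (a b : ℚ) : Prop := (m : ℤ) ∣ (a - b).num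

/-!
Work in a field of characteristic `p` containing a square root `i` of `-1`, and write
`Li_d = ∑_{0 < k < p} X ^ k / k ^ d`, `F = ∑_{0 < k < p} (H_k / k) X ^ k` and `c = Li_2(1)`. The
identity `Li_1 ^ 2 = 2 ((1 - X ^ p) F - Li_2 + c X ^ p)` holds because both sides have the same
derivative and agree at `0` and `1`, while a polynomial of degree less than `2 p` with zero
derivative is affine in `X ^ p`. Together with the inversion `X ↦ 1 / X` it expresses `F(-1)` and
`F(i) + F(-i)` in terms of `Li_1` and `c`. In `F(1) + F(-1) - F(i) - F(-i)`, which is four times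
the sum over `k ≡ 2 (mod 4)`, the terms in `c` cancel, and the duplication formula relates `Li_1(i)`
to `Li_1(-1)`. Finally `Li_1` is the reduction of `(1 - X ^ p - (1 - X) ^ p) / p`, so that
`Li_1(-1) = -2 q_p(2)`.
-/

open Finset Polynomial

theorem eq_zero_of_derivative_eq_zero_of_eval_eq_zero {R : Type*} [CommRing R] [IsDomain R]
    (p : ℕ) [Fact p.Prime] [CharP R p] {f : R[X]} (s : Finset R) (hf' : derivative f = 0)
    (hdeg : f.natDegree < #s * p) (hs : ∀ x ∈ s, f.eval x = 0) : f = 0 := by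
  obtain ⟨g, rfl⟩ : ∃ g, expand R p g = f :=
    ⟨_, expand_contract p hf' (Fact.out : p.Prime).ne_zero⟩
  rw [natDegree_expand] at hdeg
  have hinj : Function.Injective fun x : s ↦ frobenius R p x :=
    (frobenius_inj R p).comp Subtype.val_injective
  rw [eq_zero_of_natDegree_lt_card_of_eval_eq_zero g hinj
    (fun x ↦ by simpa [frobenius_def] using hs x x.2)
    (by simpa using lt_of_mul_lt_mul_right hdeg p.zero_le), map_zero]

section CharP

variable {R : Type*} [Ring R] (p : ℕ) [CharP R p]

theorem natCast_ne_zero_of_mem_Ico {k : ℕ} (hk : k ∈ Ico 1 p) : (k : R) ≠ 0 := by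
  obtain ⟨hk₁, hkp⟩ := mem_Ico.mp hk
  exact (CharP.cast_eq_zero_iff R p k).not.mpr (Nat.not_dvd_of_pos_of_lt hk₁ hkp)

theorem natCast_self_sub {k : ℕ} (hk : k ≤ p) : ((p - k : ℕ) : R) = -k := by
  rw [Nat.cast_sub hk, CharP.cast_eq_zero, zero_sub]

theorem two_ne_zero_of_odd_charP [Nontrivial R] (hodd : Odd p) : (2 : R) ≠ 0 :=
  Ring.two_ne_zero <| by
    rw [ringChar.eq R p]
    rintro rfl
    exact absurd hodd (by decide)

theorem choose_sub_one_eq_neg_one_pow [Fact p.Prime] {k : ℕ} (hk : k < p) :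
    ((p - 1).choose k : R) = (-1) ^ k := by
  induction k with
  | zero => simp
  | succ k ih =>
    have hp : p.Prime := Fact.out
    have hpascal : (p - 1).choose k + (p - 1).choose (k + 1) = p.choose (k + 1) := by
      rw [← Nat.choose_succ_succ', Nat.sub_add_cancel hp.one_le]
    have hzero : (p.choose (k + 1) : R) = 0 :=
      (CharP.cast_eq_zero_iff R p _).mpr (hp.dvd_choose_self k.succ_ne_zero hk)
    rw [← hpascal, Nat.cast_add, ih (by lia)] at hzero
    rw [pow_succ, mul_neg_one]
    exact eq_neg_of_add_eq_zero_right hzero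

theorem choose_div_self_eq {K : Type*} [Field K] [CharP K p] [Fact p.Prime] {k : ℕ}
    (hk : k ∈ Ico 1 p) :
    ((p.choose k / p : ℕ) : K) = (-1) ^ (k + 1) * (k : K)⁻¹ := by
  have hp : p.Prime := Fact.out
  obtain ⟨hk₁, hkp⟩ := mem_Ico.mp hk
  obtain ⟨j, rfl⟩ := Nat.exists_eq_add_of_le' hk₁
  obtain ⟨c, hc⟩ := hp.dvd_choose_self j.succ_ne_zero hkp
  have habsorb : (p - 1).choose j = c * (j + 1) := by
    have h := Nat.add_one_mul_choose_eq (p - 1) j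
    rw [Nat.sub_add_cancel hp.one_le, hc, mul_assoc] at h
    exact Nat.eq_of_mul_eq_mul_left hp.pos h
  rw [hc, Nat.mul_div_cancel_left c hp.pos,
    eq_mul_inv_iff_mul_eq₀ (natCast_ne_zero_of_mem_Ico p hk), ← Nat.cast_mul, ← habsorb,
    choose_sub_one_eq_neg_one_pow p (by lia)]
  ring

end CharP

theorem X_mul_derivative_sum {R : Type*} [CommSemiring R] (s : Finset ℕ) (a : ℕ → R) :
    X * derivative (∑ k ∈ s, C (a k) * X ^ k) = ∑ k ∈ s, C (a k * k) * X ^ k := by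
  rw [derivative_sum, mul_sum]
  refine sum_congr rfl fun k _ ↦ ?_
  rcases k with _ | k
  · simp
  · rw [derivative_C_mul_X_pow, Nat.add_sub_cancel]
    ring

section Polylog

/-- The finite polylogarithm `∑_{0 < k < p} X ^ k / k ^ d` of order `d`, a truncation of the
series of `Li_d` that makes sense in characteristic `p`. -/
noncomputable def finitePolylog (K : Type*) [Field K] (p d : ℕ) : K[X] :=
  ∑ k ∈ Ico 1 p, C ((k : K)⁻¹ ^ d) * X ^ k

/-- The harmonic number `∑_{j=1}^n 1/j` in an arbitrary field; `fieldHarmonic ℚ` is `H`.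
In characteristic `p` it is the reduction of `H n` only for `n < p`. -/
def fieldHarmonic (K : Type*) [Field K] (n : ℕ) : K :=
  ∑ j ∈ Icc 1 n, (j : K)⁻¹

/-- The truncated generating polynomial `∑_{0 < k < p} (H_k / k) X ^ k`; the sums of `H_k / k` over
residue classes are combinations of its values at roots of unity. -/
noncomputable def harmonicPolylog (K : Type*) [Field K] (p : ℕ) : K[X] :=
  ∑ k ∈ Ico 1 p, C (fieldHarmonic K k * (k : K)⁻¹) * X ^ k

variable {K : Type*} [Field K] (p : ℕ)

theorem fieldHarmonic_succ (n : ℕ) :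
    fieldHarmonic K (n + 1) = fieldHarmonic K n + ((n + 1 : ℕ) : K)⁻¹ :=
  sum_Icc_succ_top n.succ_pos _

theorem eval_finitePolylog (d : ℕ) (x : K) :
    (finitePolylog K p d).eval x = ∑ k ∈ Ico 1 p, (k : K)⁻¹ ^ d * x ^ k := by
  simp [finitePolylog, eval_finsetSum]

theorem eval_harmonicPolylog (x : K) :
    (harmonicPolylog K p).eval x = ∑ k ∈ Ico 1 p, fieldHarmonic K k * (k : K)⁻¹ * x ^ k := by
  simp [harmonicPolylog, eval_finsetSum]

theorem eval_zero_finitePolylog (d : ℕ) : (finitePolylog K p d).eval 0 = 0 := by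
  rw [eval_finitePolylog]
  exact sum_eq_zero fun k hk ↦ by simp [(Nat.one_le_iff_ne_zero.mp (mem_Ico.mp hk).1)]

theorem eval_zero_harmonicPolylog : (harmonicPolylog K p).eval 0 = 0 := by
  rw [eval_harmonicPolylog]
  exact sum_eq_zero fun k hk ↦ by simp [(Nat.one_le_iff_ne_zero.mp (mem_Ico.mp hk).1)]

theorem natDegree_finitePolylog_le (d : ℕ) : (finitePolylog K p d).natDegree ≤ p - 1 :=
  natDegree_sum_le_of_forall_le _ _ fun _ hk ↦
    (natDegree_C_mul_X_pow_le _ _).trans (Nat.le_sub_one_of_lt (mem_Ico.mp hk).2)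

theorem natDegree_harmonicPolylog_le : (harmonicPolylog K p).natDegree ≤ p - 1 :=
  natDegree_sum_le_of_forall_le _ _ fun _ hk ↦
    (natDegree_C_mul_X_pow_le _ _).trans (Nat.le_sub_one_of_lt (mem_Ico.mp hk).2)

theorem one_sub_X_mul_finitePolylog_zero (hp : 0 < p) :
    (1 - X) * finitePolylog K p 0 = X - X ^ p := by
  simp only [finitePolylog, pow_zero, C_1, one_mul]
  rw [mul_comm, ← neg_sub X 1, mul_neg, geom_sum_Ico_mul X hp, pow_one, neg_sub]

theorem one_sub_X_mul_sum_fieldHarmonic (n : ℕ) :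
    (1 - X) * ∑ k ∈ Ico 1 (n + 1), C (fieldHarmonic K k) * X ^ k =
      finitePolylog K (n + 1) 1 - C (fieldHarmonic K n) * X ^ (n + 1) := by
  simp only [finitePolylog]
  induction n with
  | zero => simp [fieldHarmonic]
  | succ n ih =>
    rw [sum_Ico_succ_top (Nat.le_add_left 1 n), sum_Ico_succ_top (Nat.le_add_left 1 n), mul_add, ih,
      fieldHarmonic_succ, C_add, pow_one, pow_succ X (n + 1)]
    ring

theorem two_mul_sum_fieldHarmonic_mul_inv (n : ℕ) :
    2 * ∑ k ∈ Icc 1 n, fieldHarmonic K k * (k : K)⁻¹ =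
      fieldHarmonic K n ^ 2 + ∑ k ∈ Icc 1 n, (k : K)⁻¹ ^ 2 := by
  induction n with
  | zero => simp [fieldHarmonic]
  | succ n ih =>
    rw [sum_Icc_succ_top n.succ_pos, sum_Icc_succ_top n.succ_pos, mul_add, ih, fieldHarmonic_succ]
    ring

variable [CharP K p]

theorem X_mul_derivative_finitePolylog_succ (d : ℕ) :
    X * derivative (finitePolylog K p (d + 1)) = finitePolylog K p d := by
  rw [finitePolylog, X_mul_derivative_sum]
  refine sum_congr rfl fun k hk ↦ ?_
  rw [pow_succ, inv_mul_cancel_right₀ (natCast_ne_zero_of_mem_Ico p hk)]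

theorem X_mul_derivative_harmonicPolylog :
    X * derivative (harmonicPolylog K p) = ∑ k ∈ Ico 1 p, C (fieldHarmonic K k) * X ^ k := by
  rw [harmonicPolylog, X_mul_derivative_sum]
  refine sum_congr rfl fun k hk ↦ ?_
  rw [inv_mul_cancel_right₀ (natCast_ne_zero_of_mem_Ico p hk)]

theorem pow_mul_eval_inv_finitePolylog (d : ℕ) {x : K} (hx : x ≠ 0) :
    x ^ p * (finitePolylog K p d).eval x⁻¹ = (-1) ^ d * (finitePolylog K p d).eval x := by
  simp only [eval_finitePolylog, mul_sum]
  refine sum_nbij' (p - ·) (p - ·) ?_ ?_ ?_ ?_ fun k hk ↦ ?_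
  any_goals
    intro k hk
    simp only [mem_Ico] at hk ⊢
    lia
  have hkp : k ≤ p := (mem_Ico.mp hk).2.le
  rw [natCast_self_sub p hkp, inv_neg, pow_sub₀ x hx hkp, inv_pow x, ← mul_assoc,
    ← mul_assoc, ← mul_pow, neg_one_mul, neg_neg]
  ring

section Odd

variable (hodd : Odd p)
include hodd

theorem eval_one_finitePolylog_of_odd {d : ℕ} (hd : Odd d) : (finitePolylog K p d).eval 1 = 0 := by
  have h := pow_mul_eval_inv_finitePolylog p d (one_ne_zero (α := K))
  rw [inv_one, one_pow, one_mul, hd.neg_one_pow] at h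
  exact (mul_eq_zero.mp (by linear_combination h)).resolve_left (two_ne_zero_of_odd_charP p hodd)

theorem eval_neg_one_finitePolylog_of_even {d : ℕ} (hd : Even d) :
    (finitePolylog K p d).eval (-1) = 0 := by
  have h := pow_mul_eval_inv_finitePolylog p d (neg_ne_zero.mpr (one_ne_zero (α := K)))
  rw [inv_neg, inv_one, hodd.neg_one_pow, hd.neg_one_pow] at h
  exact (mul_eq_zero.mp (by linear_combination -h)).resolve_left (two_ne_zero_of_odd_charP p hodd)

theorem eval_neg_finitePolylog_of_sq_eq_neg_one (d : ℕ) {i : K} (hi : i ^ 2 = -1) :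
    (finitePolylog K p d).eval (-i) = (-1) ^ (d + 1) * i ^ p * (finitePolylog K p d).eval i := by
  have hi₀ : i ≠ 0 := by
    rintro rfl
    simp at hi
  have hinv : i⁻¹ = -i := inv_eq_of_mul_eq_one_right (by linear_combination -hi)
  have he : (i ^ p) ^ 2 = -1 := by rw [pow_right_comm, hi, hodd.neg_one_pow]
  have h := pow_mul_eval_inv_finitePolylog p d hi₀
  rw [hinv] at h
  linear_combination (finitePolylog K p d).eval (-i) * he - i ^ p * h

theorem fieldHarmonic_sub_one_eq_zero : fieldHarmonic K (p - 1) = 0 := by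
  rw [← eval_one_finitePolylog_of_odd p hodd odd_one, eval_finitePolylog, fieldHarmonic,
    Icc_sub_one_right_eq_Ico_of_not_isMin (not_isMin_of_lt hodd.pos)]
  simp

theorem X_mul_one_sub_X_mul_derivative_harmonicPolylog :
    X * (1 - X) * derivative (harmonicPolylog K p) = finitePolylog K p 1 := by
  have h := one_sub_X_mul_sum_fieldHarmonic (K := K) (p - 1)
  rw [Nat.sub_add_cancel hodd.pos, fieldHarmonic_sub_one_eq_zero p hodd, C_0, zero_mul,
    sub_zero] at h
  rw [mul_right_comm, X_mul_derivative_harmonicPolylog, mul_comm, h]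

theorem two_mul_eval_one_harmonicPolylog :
    2 * (harmonicPolylog K p).eval 1 = (finitePolylog K p 2).eval 1 := by
  have h := two_mul_sum_fieldHarmonic_mul_inv (K := K) (p - 1)
  rw [fieldHarmonic_sub_one_eq_zero p hodd,
    Icc_sub_one_right_eq_Ico_of_not_isMin (not_isMin_of_lt hodd.pos)] at h
  simpa [eval_harmonicPolylog, eval_finitePolylog] using h

variable [Fact p.Prime]

theorem sq_finitePolylog_one :
    finitePolylog K p 1 ^ 2 = 2 * ((1 - X ^ p) * harmonicPolylog K p - finitePolylog K p 2 +
      C ((finitePolylog K p 2).eval 1) * X ^ p) := by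
  classical
  set c := (finitePolylog K p 2).eval 1
  rw [← sub_eq_zero]
  refine eq_zero_of_derivative_eq_zero_of_eval_eq_zero p {0, 1} ?_ ?_ ?_
  · have hXp : derivative (X ^ p : K[X]) = 0 := by
      rw [derivative_X_pow, CharP.cast_eq_zero, C_0, zero_mul]
    have hX : (X * (1 - X) : K[X]) ≠ 0 :=
      mul_ne_zero X_ne_zero (sub_ne_zero.mpr (X_ne_C 1).symm)
    have h₀ := one_sub_X_mul_finitePolylog_zero (K := K) p hodd.pos
    have h₁ := X_mul_derivative_finitePolylog_succ (K := K) p 0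
    have h₂ := X_mul_derivative_finitePolylog_succ (K := K) p 1
    have hF := X_mul_one_sub_X_mul_derivative_harmonicPolylog (K := K) p hodd
    refine (mul_eq_zero.mp ?_).resolve_left hX
    simp only [derivative_sub, derivative_add, derivative_mul, derivative_sq, hXp, derivative_one,
      derivative_C, derivative_ofNat, map_ofNat]
    rw [zero_add] at h₁
    rw [one_add_one_eq_two] at h₂
    linear_combination 2 * (1 - X) * finitePolylog K p 1 * h₁ + 2 * finitePolylog K p 1 * h₀
      - 2 * (1 - X ^ p) * hF + 2 * (1 - X) * h₂
  · rw [card_pair zero_ne_one]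
    have hone : (1 - X ^ p : K[X]).natDegree ≤ p := by compute_degree
    have hp := (Fact.out : p.Prime).one_lt
    exact (natDegree_sub_le_of_le
      (natDegree_pow_le_of_le 2 (natDegree_finitePolylog_le p 1))
      (natDegree_mul_le_of_le (natDegree_ofNat 2).le
        (natDegree_add_le_of_le
          (natDegree_sub_le_of_le
            (natDegree_mul_le_of_le hone (natDegree_harmonicPolylog_le p))
            (natDegree_finitePolylog_le p 2))
          (natDegree_C_mul_X_pow_le c p)))).trans_lt (by lia)
  · have hp : p ≠ 0 := hodd.pos.ne'
    simp [eval_zero_finitePolylog, eval_zero_harmonicPolylog, hp, c,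
      eval_one_finitePolylog_of_odd p hodd odd_one]

theorem two_mul_one_sub_pow_mul_eval_harmonicPolylog (x : K) :
    2 * (1 - x ^ p) * (harmonicPolylog K p).eval x = (finitePolylog K p 1).eval x ^ 2 +
      2 * ((finitePolylog K p 2).eval x - (finitePolylog K p 2).eval 1 * x ^ p) := by
  have h := congr_arg (eval x) (sq_finitePolylog_one (K := K) p hodd)
  simp only [eval_pow, eval_mul, eval_add, eval_sub, eval_ofNat, eval_one, eval_X, eval_C] at h
  linear_combination -h

theorem four_mul_eval_neg_one_harmonicPolylog :
    4 * (harmonicPolylog K p).eval (-1) =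
      (finitePolylog K p 1).eval (-1) ^ 2 + 2 * (finitePolylog K p 2).eval 1 := by
  have h := two_mul_one_sub_pow_mul_eval_harmonicPolylog p hodd (-1 : K)
  rw [hodd.neg_one_pow, eval_neg_one_finitePolylog_of_even p hodd even_two] at h
  linear_combination h

end Odd

end Polylog

section Lift

/-- The integer polynomial `(1 - X ^ p - (1 - X) ^ p) / p`, a lift to `ℤ[X]` of the finite
logarithm `finitePolylog K p 1`. -/
noncomputable def finiteLogLift (p : ℕ) : ℤ[X] :=
  ∑ k ∈ Ico 1 p, C ((-1) ^ (k + 1) * ((p.choose k / p : ℕ) : ℤ)) * X ^ k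

variable (p : ℕ) [Fact p.Prime]

theorem map_finiteLogLift (K : Type*) [Field K] [CharP K p] :
    (finiteLogLift p).map (Int.castRingHom K) = finitePolylog K p 1 := by
  simp only [finiteLogLift, finitePolylog, Polynomial.map_sum]
  refine sum_congr rfl fun k hk ↦ ?_
  have hsign : ((-1) ^ (k + 1) * (-1) ^ (k + 1) : K) = 1 := by simp [← mul_pow]
  rw [Polynomial.map_mul, Polynomial.map_pow, map_X, map_C]
  simp only [map_mul (Int.castRingHom K), map_pow, map_neg, map_one, map_natCast,
    choose_div_self_eq p hk, ← mul_assoc, hsign, one_mul, pow_one]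

theorem intCast_eval_finiteLogLift (K : Type*) [Field K] [CharP K p] (n : ℤ) :
    (((finiteLogLift p).eval n : ℤ) : K) = (finitePolylog K p 1).eval (n : K) := by
  rw [← map_finiteLogLift p K, eval_intCast_map, eq_intCast, Int.cast_id]

variable (hodd : Odd p)
include hodd

theorem natCast_mul_finiteLogLift : (p : ℤ[X]) * finiteLogLift p = 1 - X ^ p - (1 - X) ^ p := by
  have hp : p.Prime := Fact.out
  have hbinom : (1 - X : ℤ[X]) ^ p =
      1 + ∑ k ∈ Ico 1 p, (-X : ℤ[X]) ^ k * (p.choose k : ℤ[X]) - X ^ p := by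
    rw [sub_eq_neg_add, add_pow, sum_range_succ, range_eq_Ico, sum_eq_sum_Ico_succ_bot hp.pos]
    simp [hodd.neg_pow, sub_eq_add_neg]
  rw [hbinom, finiteLogLift, mul_sum, ← sub_eq_zero, ← sub_add_eq_sub_sub]
  have hterm : ∀ k ∈ Ico 1 p, (-X : ℤ[X]) ^ k * (p.choose k : ℤ[X]) =
      -((p : ℤ[X]) * (C ((-1) ^ (k + 1) * ((p.choose k / p : ℕ) : ℤ)) * X ^ k)) := by
    intro k hk
    obtain ⟨hk₁, hkp⟩ := mem_Ico.mp hk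
    obtain ⟨c, hc⟩ := hp.dvd_choose_self (Nat.one_le_iff_ne_zero.mp hk₁) hkp
    rw [hc, Nat.mul_div_cancel_left c hp.pos, neg_pow (X : ℤ[X]) k]
    simp only [map_mul, map_pow, map_neg, map_one, map_natCast, Nat.cast_mul]
    ring
  rw [sum_congr rfl hterm, sum_neg_distrib]
  ring

-- Divide `(1 - X ^ 2) ^ p = (1 - X) ^ p * (1 + X) ^ p` by `p`.
theorem finiteLogLift_comp_sq :
    (finiteLogLift p).comp (X ^ 2) = (1 + X ^ p) * finiteLogLift p +
      (1 - X ^ p) * (finiteLogLift p).comp (-X) -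
        (p : ℤ[X]) * (finiteLogLift p * (finiteLogLift p).comp (-X)) := by
  have hlift := natCast_mul_finiteLogLift p hodd
  have hcomp (q : ℤ[X]) : (p : ℤ[X]) * (finiteLogLift p).comp q = 1 - q ^ p - (1 - q) ^ p := by
    simpa using congr_arg (·.comp q) hlift
  have hneg := hcomp (-X)
  rw [hodd.neg_pow, sub_neg_eq_add, sub_neg_eq_add] at hneg
  have hsq : (1 - X ^ 2 : ℤ[X]) ^ p = (1 - X) ^ p * (1 + X) ^ p := by rw [← mul_pow]; ring
  refine mul_left_cancel₀ (Nat.cast_ne_zero.mpr hodd.pos.ne' : (p : ℤ[X]) ≠ 0) ?_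
  linear_combination hcomp (X ^ 2) - hsq - (1 + X ^ p - p * (finiteLogLift p).comp (-X)) * hlift
    - (1 - X) ^ p * hneg

theorem two_pow_sub_one_sub_one_div_eq :
    ((2 : ℚ) ^ (p - 1) - 1) / p = -((finiteLogLift p).eval (-1) : ℤ) / 2 := by
  have hp : (p : ℚ) ≠ 0 := Nat.cast_ne_zero.mpr hodd.pos.ne'
  have h := congr_arg (eval (-1)) (natCast_mul_finiteLogLift p hodd)
  simp only [eval_mul, eval_natCast, eval_sub, eval_one, eval_pow, eval_X, hodd.neg_one_pow] at h
  have hq : (p : ℚ) * ((finiteLogLift p).eval (-1) : ℤ) = 1 - -1 - (1 - -1) ^ p := mod_cast h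
  have hpow : (2 : ℚ) ^ p = 2 * 2 ^ (p - 1) := (mul_pow_sub_one hodd.pos.ne' 2).symm
  rw [div_eq_div_iff hp two_ne_zero]
  norm_num at hq
  linear_combination hq - hpow

end Lift

section FourthRoots

variable {R : Type*} [CommRing R]

theorem one_pow_add_neg_one_pow_sub_pow_sub_neg_pow {i : R} (hi : i ^ 2 = -1) (k : ℕ) :
    1 ^ k + (-1) ^ k - i ^ k - (-i) ^ k = if k % 4 = 2 then 4 else 0 := by
  have hpow {x : R} (hx : x ^ 4 = 1) : x ^ k = x ^ (k % 4) := pow_eq_pow_mod k hx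
  have hi₄ : i ^ 4 = 1 := by linear_combination (i ^ 2 - 1) * hi
  rw [hpow (one_pow 4), hpow (x := -1) (by norm_num), hpow hi₄,
    hpow (x := -i) (by rwa [Even.neg_pow (by decide)])]
  have hr : k % 4 < 4 := Nat.mod_lt _ (by decide)
  interval_cases k % 4
  · norm_num
  · norm_num
  · norm_num
    linear_combination (-2) * hi
  · norm_num
    ring

theorem four_mul_sum_filter_mod_four_eq_two (s : Finset ℕ) (a : ℕ → R) {i : R}
    (hi : i ^ 2 = -1) :
    4 * ∑ k ∈ s with k % 4 = 2, a k =
      ∑ k ∈ s, a k * 1 ^ k + ∑ k ∈ s, a k * (-1) ^ k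
        - ∑ k ∈ s, a k * i ^ k - ∑ k ∈ s, a k * (-i) ^ k := by
  rw [sum_filter, mul_sum, ← sum_add_distrib, ← sum_sub_distrib, ← sum_sub_distrib]
  refine sum_congr rfl fun k _ ↦ ?_
  rw [← mul_add, ← mul_sub, ← mul_sub, one_pow_add_neg_one_pow_sub_pow_sub_neg_pow hi]
  split_ifs <;> ring

end FourthRoots

section SpecialValues

variable {K : Type*} [Field K] (p : ℕ) [Fact p.Prime] [CharP K p] (hodd : Odd p)
include hodd

theorem eval_sq_finitePolylog_one (x : K) :
    (finitePolylog K p 1).eval (x ^ 2) = (1 + x ^ p) * (finitePolylog K p 1).eval x +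
      (1 - x ^ p) * (finitePolylog K p 1).eval (-x) := by
  have h := congr_arg (fun f : ℤ[X] ↦ (f.map (Int.castRingHom K)).eval x)
    (finiteLogLift_comp_sq p hodd)
  simpa [map_finiteLogLift, Polynomial.map_comp] using h

theorem sixteen_mul_eval_add_eval_neg_harmonicPolylog {i : K} (hi : i ^ 2 = -1) :
    16 * ((harmonicPolylog K p).eval i + (harmonicPolylog K p).eval (-i)) =
      (finitePolylog K p 1).eval (-1) ^ 2 + 16 * (finitePolylog K p 2).eval 1 := by
  have he : (i ^ p) ^ 2 = -1 := by rw [pow_right_comm, hi, hodd.neg_one_pow]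
  have hneg (d : ℕ) := eval_neg_finitePolylog_of_sq_eq_neg_one p hodd d hi
  have hdup := eval_sq_finitePolylog_one p hodd i
  have hF := two_mul_one_sub_pow_mul_eval_harmonicPolylog p hodd i
  have hFneg := two_mul_one_sub_pow_mul_eval_harmonicPolylog p hodd (-i)
  rw [hi, hneg 1] at hdup
  rw [hneg 1, hneg 2, hodd.neg_pow] at hFneg
  rw [hdup]
  generalize i ^ p = e at *
  generalize (finitePolylog K p 1).eval i = u at *
  generalize (finitePolylog K p 2).eval i = v at *
  generalize (finitePolylog K p 2).eval 1 = c at *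
  -- `(1 + e) * (1 - e) = 2`, so these multipliers clear the coefficients of the two values.
  linear_combination 4 * (1 + e) * hF + 4 * (1 - e) * hFneg +
    (8 * ((harmonicPolylog K p).eval i + (harmonicPolylog K p).eval (-i)) + u ^ 2 * (3 - e ^ 2) +
      8 * v - 16 * c) * he

theorem sixtyFour_mul_sum_fieldHarmonic_mul_inv {i : K} (hi : i ^ 2 = -1) :
    64 * ∑ k ∈ Icc 1 (p - 1) with k % 4 = 2, fieldHarmonic K k * (k : K)⁻¹ =
      3 * (finitePolylog K p 1).eval (-1) ^ 2 := by
  have hfilter := four_mul_sum_filter_mod_four_eq_two (Ico 1 p)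
    (fun k ↦ fieldHarmonic K k * (k : K)⁻¹) hi
  simp only [← eval_harmonicPolylog] at hfilter
  rw [Icc_sub_one_right_eq_Ico_of_not_isMin (not_isMin_of_lt hodd.pos)]
  linear_combination 16 * hfilter + 8 * two_mul_eval_one_harmonicPolylog (K := K) p hodd +
    4 * four_mul_eval_neg_one_harmonicPolylog (K := K) p hodd -
    sixteen_mul_eval_add_eval_neg_harmonicPolylog p hodd hi

end SpecialValues

/-- The rational number `x` reduces to `a` in the field `K`: its denominator is invertible in `K`
and its image is `a`. The first condition is needed because `x.num / x.den` has the junk value `0`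
when the denominator vanishes in `K`. -/
def HasReduction {K : Type*} [Field K] (x : ℚ) (a : K) : Prop :=
  (x.den : K) ≠ 0 ∧ (x : K) = a

namespace HasReduction

variable {K : Type*} [Field K] {x y : ℚ} {a b : K}

theorem intCast (m : ℤ) : HasReduction (m : ℚ) (m : K) := by
  simp [HasReduction]

theorem inv_natCast {n : ℕ} (hn : (n : K) ≠ 0) : HasReduction (n : ℚ)⁻¹ (n : K)⁻¹ := by
  have hpos : 0 < n := Nat.pos_of_ne_zero fun h ↦ hn (by simp [h])
  exact ⟨by rwa [Rat.inv_natCast_den_of_pos hpos], Rat.cast_inv_nat n⟩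

theorem add (hx : HasReduction x a) (hy : HasReduction y b) : HasReduction (x + y) (a + b) :=
  ⟨ne_zero_of_dvd_ne_zero (by simp [hx.1, hy.1]) (Nat.cast_dvd_cast (Rat.add_den_dvd x y)),
    by rw [Rat.cast_add_of_ne_zero hx.1 hy.1, hx.2, hy.2]⟩

theorem mul (hx : HasReduction x a) (hy : HasReduction y b) : HasReduction (x * y) (a * b) :=
  ⟨ne_zero_of_dvd_ne_zero (by simp [hx.1, hy.1]) (Nat.cast_dvd_cast (Rat.mul_den_dvd x y)),
    by rw [Rat.cast_mul_of_ne_zero hx.1 hy.1, hx.2, hy.2]⟩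

theorem neg (hx : HasReduction x a) : HasReduction (-x) (-a) :=
  ⟨by simpa using hx.1, by rw [Rat.cast_neg, hx.2]⟩

theorem sum {ι : Type*} {s : Finset ι} {f : ι → ℚ} {g : ι → K}
    (h : ∀ k ∈ s, HasReduction (f k) (g k)) :
    HasReduction (∑ k ∈ s, f k) (∑ k ∈ s, g k) := by
  induction s using Finset.cons_induction with
  | empty => simpa using intCast (K := K) 0
  | cons k s hk ih =>
    rw [sum_cons, sum_cons]
    exact (h k (mem_cons_self k s)).add (ih fun j hj ↦ h j (mem_cons_of_mem hj))

variable (p : ℕ) [CharP K p]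

theorem fermatQuotient_two [Fact p.Prime] (hodd : Odd p) :
    HasReduction (((2 : ℚ) ^ (p - 1) - 1) / p) (-(finitePolylog K p 1).eval (-1) * 2⁻¹) := by
  have hlift := intCast (K := K) (-(finiteLogLift p).eval (-1))
  rw [Int.cast_neg, Int.cast_neg, intCast_eval_finiteLogLift p K, Int.cast_neg, Int.cast_one]
    at hlift
  rw [two_pow_sub_one_sub_one_div_eq p hodd]
  exact hlift.mul (mod_cast inv_natCast (n := 2) (mod_cast two_ne_zero_of_odd_charP p hodd))

theorem harmonic {k : ℕ} (hk : k < p) : HasReduction (H k) (fieldHarmonic K k) :=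
  sum fun j hj ↦ by
    obtain ⟨hj₁, hjk⟩ := mem_Icc.mp hj
    rw [one_div]
    exact inv_natCast (natCast_ne_zero_of_mem_Ico p (mem_Ico.mpr ⟨hj₁, hjk.trans_lt hk⟩))

theorem sum_harmonic_div {s : Finset ℕ} (hs : s ⊆ Ico 1 p) :
    HasReduction (∑ k ∈ s, H k / k) (∑ k ∈ s, fieldHarmonic K k * (k : K)⁻¹) :=
  sum fun k hk ↦ by
    rw [div_eq_mul_inv]
    exact (harmonic p (mem_Ico.mp (hs hk)).2).mul
      (inv_natCast (natCast_ne_zero_of_mem_Ico p (hs hk)))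

end HasReduction

theorem ratModEq_of_hasReduction {K : Type*} [Field K] (p : ℕ) [CharP K p] {x y : ℚ} {a : K}
    (hx : HasReduction x a) (hy : HasReduction y a) : ratModEq p x y := by
  obtain ⟨hden, hzero⟩ := hx.add hy.neg
  rw [add_neg_cancel, Rat.cast_def, div_eq_zero_iff] at hzero
  rw [ratModEq, sub_eq_add_neg]
  exact (CharP.intCast_eq_zero_iff K p _).mp (hzero.resolve_right hden)

theorem exists_field_charP_sq_eq_neg_one (p : ℕ) [Fact p.Prime] :
    ∃ (K : Type) (_ : Field K) (_ : CharP K p) (i : K), i ^ 2 = -1 :=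
  ⟨AlgebraicClosure (ZMod p), inferInstance, inferInstance,
    IsAlgClosed.exists_pow_nat_eq (-1) two_pos⟩

theorem stmt16 (p : ℕ) (hp : p.Prime) (hodd : Odd p) :
    ratModEq p
      (∑ k ∈ (Finset.Icc 1 (p - 1)).filter (fun k => k % 4 = 2), H k / k)
      (3 / 16 * (((2 : ℚ) ^ (p - 1) - 1) / p) ^ 2) := by
  have : Fact p.Prime := ⟨hp⟩
  obtain ⟨K, _, _, i, hi⟩ := exists_field_charP_sq_eq_neg_one p
  have h2 : (2 : K) ≠ 0 := two_ne_zero_of_odd_charP p hodd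
  have h16 : (16 : K) ≠ 0 := by
    convert pow_ne_zero 4 h2
    norm_num
  have hsub : {k ∈ Icc 1 (p - 1) | k % 4 = 2} ⊆ Ico 1 p := by
    rw [Icc_sub_one_right_eq_Ico_of_not_isMin (not_isMin_of_lt hodd.pos)]
    exact filter_subset _ _
  have hlhs := HasReduction.sum_harmonic_div (K := K) p hsub
  have hquot := HasReduction.fermatQuotient_two (K := K) p hodd
  have hcoeff := (HasReduction.intCast 3).mul (HasReduction.inv_natCast (n := 16) (mod_cast h16))
  have hsum := sixtyFour_mul_sum_fieldHarmonic_mul_inv p hodd hi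
  refine ratModEq_of_hasReduction p hlhs ?_
  convert hcoeff.mul (hquot.mul hquot) using 1
  · push_cast
    ring
  · generalize ∑ k ∈ Icc 1 (p - 1) with k % 4 = 2, fieldHarmonic K k * (k : K)⁻¹ = S at hsum ⊢
    push_cast
    field_simp
    linear_combination hsum
end

section
/- Let p = 2n + 1 be an odd prime. Then for every k with 0 ≤ k ≤ n, C(n,k) · C(n+k,k) · (-1)^k ≡ C(2k,k)²/16^k (mod p²), as a congruence of rational numbers whose denominators are coprime to p. -/
/-!
Multiplied by `4 ^ k * (k !) ^ 2`, the two sides of the congruence become the integers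
`∏ j < k, ((2 * j + 1) ^ 2 - (2 * n + 1) ^ 2)` and `∏ j < k, (2 * j + 1) ^ 2`, which agree factor
by factor modulo `(2 * n + 1) ^ 2`. The multiplier is coprime to every divisor of `2 * n + 1` that
is coprime to `k !`, so the congruence survives the division.
-/

open Finset Nat

theorem ratModEq_of_dvd_of_mul_sub_eq {m : ℕ} {a b : ℚ} {d N : ℤ} (hd : IsCoprime (m : ℤ) d)
    (hN : (m : ℤ) ∣ N) (h : d * (a - b) = N) : ratModEq m a b := by
  have hnum : d * (a - b).num = N * (a - b).den := by
    have hq : (d * (a - b).num : ℚ) = N * (a - b).den := by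
      rw [← h, mul_assoc, Rat.mul_den_eq_num]
    exact_mod_cast hq
  exact hd.dvd_of_dvd_mul_left (hnum ▸ hN.mul_right _)

theorem cast_choose_succ_mul {R : Type*} [CommRing R] (n k : ℕ) :
    (n.choose (k + 1) : R) * (k + 1) = n.choose k * (n - k) := by
  obtain hk | hk := le_or_gt k n
  · have h := congrArg (Nat.cast : ℕ → R) (Nat.choose_succ_right_eq n k)
    simpa only [Nat.cast_mul, Nat.cast_succ, Nat.cast_sub hk] using h
  · simp only [Nat.choose_eq_zero_of_lt hk, Nat.choose_eq_zero_of_lt (hk.trans k.lt_succ_self),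
      Nat.cast_zero, zero_mul]

theorem cast_choose_mul_choose_add_succ_mul {R : Type*} [CommRing R] (n k : ℕ) :
    (n.choose (k + 1) * (n + (k + 1)).choose (k + 1) : R) * (k + 1) ^ 2 =
      n.choose k * (n + k).choose k * ((n - k) * (n + k + 1)) := by
  have hn : (n.choose (k + 1) : R) * (k + 1) = n.choose k * (n - k) := cast_choose_succ_mul n k
  have hnk : ((n + (k + 1)).choose (k + 1) : R) * (k + 1) = (n + k).choose k * (n + k + 1) := by
    rw [mul_comm ((n + k).choose k : R)]
    exact_mod_cast congrArg (Nat.cast : ℕ → R) (Nat.add_one_mul_choose_eq (n + k) k).symm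
  linear_combination (n + (k + 1)).choose (k + 1) * (k + 1 : R) * hn +
    n.choose k * (n - k : R) * hnk

theorem four_pow_mul_factorial_sq_mul_choose_mul_choose {R : Type*} [CommRing R] (n k : ℕ) :
    (4 ^ k * (k ! : R) ^ 2) * (n.choose k * (n + k).choose k * (-1) ^ k) =
      ∏ j ∈ range k, ((2 * j + 1 : R) ^ 2 - (2 * n + 1) ^ 2) := by
  induction k with
  | zero => simp
  | succ k ih =>
    rw [prod_range_succ, ← ih, Nat.factorial_succ]
    push_cast
    linear_combination (4 ^ (k + 1) * (k ! : R) ^ 2 * (-1) ^ (k + 1)) *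
      cast_choose_mul_choose_add_succ_mul (R := R) n k

theorem factorial_mul_centralBinom (k : ℕ) :
    k ! * k.centralBinom = 2 ^ k * ∏ j ∈ range k, (2 * j + 1) := by
  induction k with
  | zero => simp
  | succ k ih =>
    rw [prod_range_succ, Nat.factorial_succ]
    linear_combination k ! * Nat.succ_mul_centralBinom_succ k + 2 * (2 * k + 1) * ih

theorem four_pow_mul_factorial_sq_mul_choose_sq_div {K : Type*} [Field K] [CharZero K] (k : ℕ) :
    (4 ^ k * (k ! : K) ^ 2) * (((2 * k).choose k : K) ^ 2 / 16 ^ k) =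
      ∏ j ∈ range k, (2 * j + 1 : K) ^ 2 := by
  have h : (k ! : K) * (2 * k).choose k = 2 ^ k * ∏ j ∈ range k, (2 * j + 1 : K) := by
    exact_mod_cast congrArg (Nat.cast : ℕ → K) (factorial_mul_centralBinom k)
  have h16 : (16 : K) ^ k = 4 ^ k * (2 ^ k) ^ 2 := by
    rw [pow_right_comm, ← mul_pow]; norm_num
  calc (4 ^ k * (k ! : K) ^ 2) * (((2 * k).choose k : K) ^ 2 / 16 ^ k)
      = 4 ^ k * (k ! * (2 * k).choose k) ^ 2 / 16 ^ k := by ring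
    _ = (∏ j ∈ range k, (2 * j + 1 : K)) ^ 2 := by rw [h, h16]; field_simp
    _ = ∏ j ∈ range k, (2 * j + 1 : K) ^ 2 := (prod_pow _ _ _).symm

theorem dvd_prod_sub_const_sub_prod {ι R : Type*} [CommRing R] (s : Finset ι) (f : ι → R) (c : R) :
    c ∣ ∏ i ∈ s, (f i - c) - ∏ i ∈ s, f i := by
  have hc : Ideal.Quotient.mk (Ideal.span {c}) c = 0 := Ideal.Quotient.mk_singleton_self c
  rw [← Ideal.mem_span_singleton, ← Ideal.Quotient.eq]
  simp only [map_prod, map_sub, hc, sub_zero]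

theorem isCoprime_sq_four_pow_mul_factorial_sq {m k : ℕ} (hm : Odd m) (hk : m.Coprime k !) :
    IsCoprime ((m : ℤ) ^ 2) (4 ^ k * (k ! : ℤ) ^ 2) := by
  have h4 : m.Coprime 4 := (Nat.coprime_two_right.2 hm).pow_right 2
  exact_mod_cast ((h4.pow_right k).mul_right (hk.pow_right 2)).isCoprime.pow_left

theorem stmt17_general {m n k : ℕ} (hm : m ∣ 2 * n + 1) (hk : m.Coprime k !) :
    ratModEq (m ^ 2)
      ((n.choose k : ℚ) * ((n + k).choose k : ℚ) * (-1) ^ k)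
      (((2 * k).choose k : ℚ) ^ 2 / 16 ^ k) := by
  have hodd : Odd m := (odd_two_mul_add_one n).of_dvd_nat hm
  have hdvd : ((m ^ 2 : ℕ) : ℤ) ∣ (2 * n + 1) ^ 2 := by exact_mod_cast pow_dvd_pow_of_dvd hm 2
  refine ratModEq_of_dvd_of_mul_sub_eq (d := 4 ^ k * (k ! : ℤ) ^ 2)
    (mod_cast isCoprime_sq_four_pow_mul_factorial_sq hodd hk)
    (hdvd.trans (dvd_prod_sub_const_sub_prod (range k) (fun j ↦ (2 * j + 1 : ℤ) ^ 2) _)) ?_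
  push_cast
  rw [mul_sub, four_pow_mul_factorial_sq_mul_choose_mul_choose,
    four_pow_mul_factorial_sq_mul_choose_sq_div]

theorem stmt17 (p n : ℕ) (hp : p.Prime) (hpn : p = 2 * n + 1) (k : ℕ) (hk : k ≤ n) :
    ratModEq (p ^ 2)
      ((n.choose k : ℚ) * ((n + k).choose k : ℚ) * (-1) ^ k)
      (((2 * k).choose k : ℚ) ^ 2 / 16 ^ k) :=
  stmt17_general hpn.dvd (hp.coprime_factorial_of_lt (by omega))
end

section
/- For any positive integer n, (1/(4n·C(2n,n))) · ∑_{k=0}^{n-1} (21k + 8) · C(2k,k)³ = ∑_{k=0}^{n-1} C(n+k-1,k)², where C(a,b) denotes the binomial coefficient. In particular the left-hand side is a positive integer. -/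
/-!
Write `M(n, k) = C(n + k - 1, k)` and `B = C(2n, n)`. Summing over `0 ≤ j ≤ k`, one has
`2 (2n + 1) ∑ M(n + 1, j) ^ 2 = n ∑ M(n, j) ^ 2 + (3n + 2k + 2) M(n + 1, k) ^ 2`, a creative
telescoping relation in `n` whose certificate is checked by induction on `k`. Take `k = n`: here
`M(n + 1, n) = B`, and the last term of the sum on the right is `M(n, n) ^ 2 = B ^ 2 / 4` if
`n ≠ 0`. Multiplying by `4 B` and using `(n + 1) C(2n + 2, n + 1) = 2 (2n + 1) B` on the left shows
that `4 n B ∑ k < n, M(n, k) ^ 2` grows by exactly `(21 n + 8) B ^ 3` from `n` to `n + 1`.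
-/

open Nat (multichoose centralBinom)

theorem succ_mul_multichoose_succ (n k : ℕ) :
    (k + 1) * multichoose n (k + 1) = n * multichoose (n + 1) k := by
  have ratio := Nat.choose_succ_right_eq (n + k) k
  rw [Nat.add_sub_cancel_right] at ratio
  rw [Nat.multichoose_eq, Nat.multichoose_eq, ← Nat.add_assoc, Nat.add_sub_cancel,
    Nat.add_right_comm, Nat.add_sub_cancel, mul_comm, ratio, mul_comm]

theorem multichoose_succ_self (n : ℕ) : multichoose (n + 1) n = centralBinom n := by
  rw [Nat.multichoose_eq, Nat.centralBinom, show n + 1 + n - 1 = 2 * n by lia]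

theorem two_mul_multichoose_self {n : ℕ} (hn : n ≠ 0) :
    2 * multichoose n n = centralBinom n := by
  obtain ⟨k, rfl⟩ := Nat.exists_eq_succ_of_ne_zero hn
  have absorb : multichoose (k + 1) (k + 1) = multichoose (k + 2) k :=
    Nat.eq_of_mul_eq_mul_left k.succ_pos (succ_mul_multichoose_succ (k + 1) k)
  rw [← multichoose_succ_self, Nat.multichoose_succ_succ (k + 1), ← absorb, two_mul]

theorem two_mul_sum_multichoose_succ_sq (n k : ℕ) :
    2 * (2 * n + 1) * ∑ j ∈ Finset.range (k + 1), multichoose (n + 1) j ^ 2 =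
      n * ∑ j ∈ Finset.range (k + 1), multichoose n j ^ 2 +
        (3 * n + 2 * k + 2) * multichoose (n + 1) k ^ 2 := by
  induction k with
  | zero =>
    simp only [zero_add, Finset.sum_range_one, Nat.multichoose_zero_right]
    ring
  | succ k ih =>
    have absorb := succ_mul_multichoose_succ n k
    rw [Finset.sum_range_succ, Finset.sum_range_succ (n := k + 1), Nat.multichoose_succ_succ]
    zify at ih absorb ⊢
    linear_combination ih - (4 * (multichoose (n + 1) k : ℤ) + 2 * multichoose n (k + 1)) * absorb

theorem sum_mul_centralBinom_pow_three (n : ℕ) :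
    ∑ k ∈ Finset.range n, (21 * k + 8) * centralBinom k ^ 3 =
      4 * n * centralBinom n * ∑ k ∈ Finset.range n, multichoose n k ^ 2 := by
  induction n with
  | zero => simp
  | succ n ih =>
    have recurrence := two_mul_sum_multichoose_succ_sq n n
    rw [Finset.sum_range_succ (fun j ↦ multichoose n j ^ 2), multichoose_succ_self] at recurrence
    have diagonal : n * centralBinom n ^ 2 = n * (2 * multichoose n n) ^ 2 := by
      rcases eq_or_ne n 0 with rfl | hn
      · simp
      · rw [two_mul_multichoose_self hn]
    have central := Nat.succ_mul_centralBinom_succ n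
    rw [Finset.sum_range_succ, ih]
    zify at recurrence diagonal central ⊢
    linear_combination -4 * (centralBinom n : ℤ) * recurrence + centralBinom n * diagonal -
      4 * (∑ k ∈ Finset.range (n + 1), (multichoose (n + 1) k : ℤ) ^ 2) * central

theorem stmt18 (n : ℕ) (hn : 0 < n) :
    (1 / (4 * n * ((2 * n).choose n) : ℚ))
        * ∑ k ∈ Finset.range n, (21 * k + 8 : ℚ) * ((2 * k).choose k : ℚ) ^ 3
      = ∑ k ∈ Finset.range n, ((n + k - 1).choose k : ℚ) ^ 2 ∧
    ∃ m : ℕ, 0 < m ∧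
      (1 / (4 * n * ((2 * n).choose n) : ℚ))
          * ∑ k ∈ Finset.range n, (21 * k + 8 : ℚ) * ((2 * k).choose k : ℚ) ^ 3 = m := by
  have sum_eq : ∑ k ∈ Finset.range n, (21 * k + 8 : ℚ) * ((2 * k).choose k : ℚ) ^ 3 =
      4 * n * (2 * n).choose n * ∑ k ∈ Finset.range n, ((n + k - 1).choose k : ℚ) ^ 2 := by
    have := sum_mul_centralBinom_pow_three n
    simp only [Nat.multichoose_eq, Nat.centralBinom] at this
    exact_mod_cast this
  have denom_ne_zero : (4 * n * (2 * n).choose n : ℚ) ≠ 0 := by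
    have := Nat.centralBinom_ne_zero n
    rw [Nat.centralBinom] at this
    positivity
  rw [sum_eq, one_div, inv_mul_cancel_left₀ denom_ne_zero]
  refine ⟨rfl, ∑ k ∈ Finset.range n, (n + k - 1).choose k ^ 2, ?_, by push_cast; rfl⟩
  exact Finset.sum_pos (fun k _ ↦ pow_pos (Nat.choose_pos (by lia)) 2)
    (Finset.nonempty_range_iff.mpr hn.ne')
end

section
/- Let p > 3 be a prime. Then ∑_{k=1}^{(p-1)/2} (C(2k,k)²/16^k) · H_k^{(2)} ≡ −4·E_{p-3} (mod p). -/
/-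
Let `p = 2n + 1`. Since `-4(n - k)(n + k + 1) = (2k + 1)² - p²`, modulo `p` the weight
`C(2k,k)²/16^k` is the coefficient of `X^k` in the shifted Legendre polynomial `P_n`, so the sum in
question is congruent to `S_n = ∑ₖ [X^k]P_n · H_k^{(2)}`.

The coefficients `b_k` of `P_{n+1} + P_n` satisfy `(k + 1)² b_{k+1} = (k² - (n + 1)²) b_k`. Hence
summation by parts gives `(n + 1)² (S_{n+1} + S_n) = -2`, that is,
`S_n = -2(-1)^n ∑_{k=1}^n (-1)^k/k²`.

Finally `1/k² ≡ 4(2k)^{p-3}` by Fermat, and an alternating sum of even powers of `2k` is a sum of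
values of an Euler polynomial at `±(2n + 1) = ±p`, each congruent to its constant term `E_{p-3}`.
-/

open Finset Polynomial

section Congruence

variable {p : ℕ}

theorem ratModEq_intCast_iff (m n : ℤ) : ratModEq p m n ↔ (m : ZMod p) = n := by
  rw [ratModEq, ← Int.cast_sub, Rat.num_intCast, ← ZMod.intCast_zmod_eq_zero_iff_dvd,
    Int.cast_sub, sub_eq_zero]

variable [Fact p.Prime] {a b c d : ℚ}

theorem dvd_num_iff_padicNorm_lt_one (q : ℚ) : (p : ℤ) ∣ q.num ↔ padicNorm p q < 1 := by
  by_cases hp : p ∣ q.den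
  · have hnum : ¬(p : ℤ) ∣ q.num := fun h ↦
      Nat.not_coprime_of_dvd_of_dvd (Fact.out : p.Prime).one_lt (Int.natCast_dvd.mp h) hp q.reduced
    have hden_pos : 0 < padicNorm p q.den :=
      (padicNorm.nonneg _).lt_of_ne' (padicNorm.nonzero (mod_cast q.den_nz))
    have hden_lt : padicNorm p q.den < 1 := (padicNorm.nat_lt_one_iff _).mpr hp
    rw [iff_false_left hnum, not_lt, ← Rat.num_div_den q, padicNorm.div,
      (padicNorm.int_eq_one_iff _).mpr hnum]
    exact (one_le_div hden_pos).mpr hden_lt.le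
  · rw [← padicNorm.int_lt_one_iff, ← Rat.mul_den_eq_num q, padicNorm.mul,
      (padicNorm.nat_eq_one_iff _).mpr hp, mul_one]

theorem ratModEq_iff_padicNorm_sub_lt_one : ratModEq p a b ↔ padicNorm p (a - b) < 1 :=
  dvd_num_iff_padicNorm_lt_one (a - b)

namespace ratModEq

theorem trans (hab : ratModEq p a b) (hbc : ratModEq p b c) : ratModEq p a c := by
  rw [ratModEq_iff_padicNorm_sub_lt_one] at *
  rw [← sub_add_sub_cancel a b c]
  exact padicNorm.nonarchimedean.trans_lt (max_lt hab hbc)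

theorem add (hab : ratModEq p a b) (hcd : ratModEq p c d) : ratModEq p (a + c) (b + d) := by
  rw [ratModEq_iff_padicNorm_sub_lt_one] at *
  rw [add_sub_add_comm]
  exact padicNorm.nonarchimedean.trans_lt (max_lt hab hcd)

theorem sum {ι : Type*} {s : Finset ι} {f g : ι → ℚ} (h : ∀ i ∈ s, ratModEq p (f i) (g i)) :
    ratModEq p (∑ i ∈ s, f i) (∑ i ∈ s, g i) := by
  simp only [ratModEq_iff_padicNorm_sub_lt_one] at *
  rw [← sum_sub_distrib]
  exact padicNorm.sum_lt' h one_pos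

theorem mul_left (hc : padicNorm p c ≤ 1) (h : ratModEq p a b) : ratModEq p (c * a) (c * b) := by
  rw [ratModEq_iff_padicNorm_sub_lt_one] at *
  rw [← mul_sub, padicNorm.mul]
  exact mul_lt_one_of_nonneg_of_lt_one_right hc (padicNorm.nonneg _) h

theorem of_mul_left (hc : padicNorm p c = 1) (h : ratModEq p (c * a) (c * b)) :
    ratModEq p a b := by
  rw [ratModEq_iff_padicNorm_sub_lt_one] at *
  rwa [← mul_sub, padicNorm.mul, hc, one_mul] at h

end ratModEq

theorem padicNorm_natCast_eq_one_of_lt {k : ℕ} (hk : k ≠ 0) (hkp : k < p) : padicNorm p k = 1 :=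
  (padicNorm.nat_eq_one_iff k).mpr (Nat.not_dvd_of_pos_of_lt (Nat.pos_of_ne_zero hk) hkp)

theorem padicNorm_H2_le_one {n : ℕ} (hn : n < p) : padicNorm p (H2 n) ≤ 1 := by
  refine padicNorm.sum_le' (fun k hk ↦ ?_) zero_le_one
  have hk := mem_Icc.mp hk
  rw [padicNorm.div, IsAbsoluteValue.abv_pow (padicNorm p),
    padicNorm_natCast_eq_one_of_lt (by lia) (by lia)]
  simp

theorem ratModEq_one_div_pow {j k : ℕ} (hj : j ≤ p - 1) (hk : k ≠ 0) (hkp : k < p) :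
    ratModEq p (1 / k ^ j) (k ^ (p - 1 - j)) := by
  have hk' : (k : ZMod p) ≠ 0 := by
    rw [Ne, ZMod.natCast_eq_zero_iff]
    exact Nat.not_dvd_of_pos_of_lt (Nat.pos_of_ne_zero hk) hkp
  have hfermat : ratModEq p ((1 : ℤ) : ℚ) ((k ^ (p - 1) : ℤ) : ℚ) := by
    rw [ratModEq_intCast_iff]
    push_cast
    exact (ZMod.pow_card_sub_one_eq_one hk').symm
  refine .of_mul_left (c := k ^ j) ?_ ?_
  · rw [IsAbsoluteValue.abv_pow (padicNorm p), padicNorm_natCast_eq_one_of_lt hk hkp, one_pow]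
  · rw [mul_one_div_cancel (by positivity), ← pow_add, Nat.add_sub_cancel' hj]
    exact_mod_cast hfermat

end Congruence

section ShiftedLegendre

theorem succ_sq_mul_coeff_shiftedLegendre_succ (n k : ℕ) :
    ((k : ℤ) + 1) ^ 2 * (shiftedLegendre n).coeff (k + 1)
      = -((n - k) * (n + k + 1)) * (shiftedLegendre n).coeff k := by
  have hleft : ((k : ℤ) + 1) * n.choose (k + 1) = (n - k) * n.choose k := by
    rcases le_or_gt k n with hkn | hkn
    · have := n.choose_succ_right_eq k
      zify [hkn] at this
      linear_combination this
    · simp [Nat.choose_eq_zero_of_lt hkn, Nat.choose_eq_zero_of_lt (hkn.trans k.lt_succ_self)]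
  have hright : ((k : ℤ) + 1) * (n + (k + 1)).choose n = (n + k + 1) * (n + k).choose n := by
    have := (n + k).choose_mul_succ_eq n
    rw [show n + k + 1 - n = k + 1 by lia] at this
    push_cast [← add_assoc] at this ⊢
    zify at this
    linear_combination -this
  simp only [coeff_shiftedLegendre, pow_succ (-1 : ℤ) k]
  linear_combination -(-1) ^ k * ((k + 1) * (n + (k + 1)).choose n * hleft
    + (n - k) * n.choose k * hright)

theorem mul_coeff_shiftedLegendre_succ (n k : ℕ) :
    ((n : ℤ) + 1 - k) * (shiftedLegendre (n + 1)).coeff k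
      = (n + 1 + k) * (shiftedLegendre n).coeff k := by
  have hleft : ((n : ℤ) + 1 - k) * (n + 1).choose k = (n + 1) * n.choose k := by
    rcases le_or_gt k (n + 1) with hkn | hkn
    · have := n.choose_mul_succ_eq k
      zify [hkn] at this
      linear_combination -this
    · simp [Nat.choose_eq_zero_of_lt hkn, Nat.choose_eq_zero_of_lt (n.lt_succ_self.trans hkn)]
  have hright : ((n : ℤ) + 1) * (n + 1 + k).choose (n + 1) = (n + 1 + k) * (n + k).choose n := by
    have := (n + k).add_one_mul_choose_eq n
    rw [show n + k + 1 = n + 1 + k by lia] at this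
    zify at this
    linear_combination -this
  refine mul_left_cancel₀ (show (n : ℤ) + 1 ≠ 0 by lia) ?_
  simp only [coeff_shiftedLegendre]
  linear_combination (-1) ^ k * ((n + 1) * (n + 1 + k).choose (n + 1) * hleft
    + (n + 1) * n.choose k * hright)

theorem succ_sq_mul_coeff_shiftedLegendre_add (n k : ℕ) :
    ((k : ℤ) + 1) ^ 2 * (shiftedLegendre (n + 1) + shiftedLegendre n).coeff (k + 1)
      = (k ^ 2 - (n + 1) ^ 2) * (shiftedLegendre (n + 1) + shiftedLegendre n).coeff k := by
  have h₁ := succ_sq_mul_coeff_shiftedLegendre_succ (n + 1) k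
  have h₀ := succ_sq_mul_coeff_shiftedLegendre_succ n k
  push_cast at h₁
  simp only [coeff_add]
  linear_combination h₁ + h₀ - mul_coeff_shiftedLegendre_succ n k

open scoped Nat in
theorem centralBinom_sq_eq_coeff_shiftedLegendre {R : Type*} [CommRing R] [NoZeroDivisors R]
    {n k : ℕ} (hn : 2 * (n : R) + 1 = 0) (hk : (k ! : R) ≠ 0) :
    (k.centralBinom : R) ^ 2 = 16 ^ k * (shiftedLegendre n).coeff k := by
  have := nontrivial_of_ne _ _ hk
  induction k with
  | zero => simp [coeff_shiftedLegendre]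
  | succ k ih =>
    rw [Nat.factorial_succ, Nat.cast_mul, mul_ne_zero_iff] at hk
    have hcentral : ((k : R) + 1) * (k + 1).centralBinom
        = 2 * (2 * k + 1) * k.centralBinom := by
      exact_mod_cast congrArg (Nat.cast : ℕ → R) k.succ_mul_centralBinom_succ
    have hcoeff := congrArg (Int.cast : ℤ → R) (succ_sq_mul_coeff_shiftedLegendre_succ n k)
    push_cast at hcoeff hk
    refine mul_left_cancel₀ (pow_ne_zero 2 hk.1) ?_
    rw [← mul_pow, hcentral, pow_succ]
    linear_combination 4 * (2 * (k : R) + 1) ^ 2 * ih hk.2 - 16 ^ k * 16 * hcoeff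
      + 16 ^ k * (shiftedLegendre n).coeff k * (4 * (2 * n + 1)) * hn

theorem ratModEq_centralBinom_sq_div {p n k : ℕ} [Fact p.Prime] (hn : p = 2 * n + 1)
    (hk : k < p) :
    ratModEq p (((2 * k).choose k : ℚ) ^ 2 / 16 ^ k) ((shiftedLegendre n).coeff k) := by
  have hpn : 2 * (n : ZMod p) + 1 = 0 := by
    exact_mod_cast (ZMod.natCast_eq_zero_iff (2 * n + 1) p).mpr hn.dvd
  have hfact : (k.factorial : ZMod p) ≠ 0 := by
    rwa [Ne, ZMod.natCast_eq_zero_iff, (Fact.out : p.Prime).dvd_factorial, not_le]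
  have htwo : padicNorm p (2 : ℕ) = 1 :=
    padicNorm_natCast_eq_one_of_lt two_ne_zero (by have := (Fact.out : p.Prime).two_le; lia)
  refine .of_mul_left (c := 16 ^ k) ?_ ?_
  · rw [show (16 : ℚ) = (2 : ℕ) ^ 4 by norm_num, ← pow_mul,
      IsAbsoluteValue.abv_pow (padicNorm p), htwo, one_pow]
  · rw [mul_div_cancel₀ _ (by positivity), ← Nat.centralBinom_eq_two_mul_choose]
    have hmod : ratModEq p ((k.centralBinom ^ 2 : ℤ) : ℚ)
        ((16 ^ k * (shiftedLegendre n).coeff k : ℤ) : ℚ) := by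
      rw [ratModEq_intCast_iff]
      push_cast
      exact centralBinom_sq_eq_coeff_shiftedLegendre hpn hfact
    exact_mod_cast hmod

end ShiftedLegendre

section Telescoping

variable {R : Type*} [CommRing R] {b h : ℕ → R} {y : R} {M : ℕ}

theorem sq_mul_sum_range_add_eq_zero
    (hb : ∀ k < M, ((k : R) + 1) ^ 2 * b (k + 1) = (k ^ 2 - y ^ 2) * b k) :
    y ^ 2 * ∑ k ∈ range M, b k + M ^ 2 * b M = 0 := by
  induction M with
  | zero => simp
  | succ M ih =>
    rw [sum_range_succ]
    push_cast
    linear_combination ih (fun k hk ↦ hb k (by lia)) + hb M (by lia)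

theorem sq_mul_sum_range_mul_add_eq
    (hb : ∀ k < M, ((k : R) + 1) ^ 2 * b (k + 1) = (k ^ 2 - y ^ 2) * b k)
    (hh : ∀ k < M, ((k : R) + 1) ^ 2 * (h (k + 1) - h k) = 1) :
    y ^ 2 * ∑ k ∈ range M, b k * h k + M ^ 2 * (b M * h M)
      = ∑ k ∈ range (M + 1), b k - b 0 := by
  induction M with
  | zero => simp
  | succ M ih =>
    rw [sum_range_succ, sum_range_succ b]
    push_cast
    linear_combination ih (fun k hk ↦ hb k (by lia)) (fun k hk ↦ hh k (by lia))
      + h M * hb M (by lia) + b (M + 1) * hh M (by lia)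

end Telescoping

section HarmonicSum

theorem H2_succ (n : ℕ) : H2 (n + 1) = H2 n + 1 / (n + 1) ^ 2 := by
  simp [H2, sum_Icc_succ_top]

theorem succ_sq_mul_sum_shiftedLegendre_add_mul_H2 (n : ℕ) :
    ((n : ℚ) + 1) ^ 2 * ∑ k ∈ range (n + 2),
      ((shiftedLegendre (n + 1) + shiftedLegendre n).coeff k : ℚ) * H2 k = -2 := by
  have hb (k : ℕ) (_ : k < n + 1) : ((k : ℚ) + 1) ^ 2 *
      ((shiftedLegendre (n + 1) + shiftedLegendre n).coeff (k + 1) : ℚ) = (k ^ 2 - (n + 1) ^ 2) *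
      ((shiftedLegendre (n + 1) + shiftedLegendre n).coeff k : ℚ) := by
    exact_mod_cast congrArg (Int.cast : ℤ → ℚ) (succ_sq_mul_coeff_shiftedLegendre_add n k)
  have hh (k : ℕ) (_ : k < n + 1) : ((k : ℚ) + 1) ^ 2 * (H2 (k + 1) - H2 k) = 1 := by
    rw [H2_succ]
    field_simp
    ring
  have hsum := sq_mul_sum_range_add_eq_zero
    (b := fun k ↦ ((shiftedLegendre (n + 1) + shiftedLegendre n).coeff k : ℚ)) hb
  have hsumH := sq_mul_sum_range_mul_add_eq
    (b := fun k ↦ ((shiftedLegendre (n + 1) + shiftedLegendre n).coeff k : ℚ)) hb hh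
  push_cast at hsum hsumH
  rw [← mul_add, ← sum_range_succ] at hsum hsumH
  have hzero := (mul_eq_zero.mp hsum).resolve_left (by positivity)
  rw [hsumH, hzero]
  norm_num [coeff_shiftedLegendre]

theorem sum_coeff_shiftedLegendre_mul_H2 (n : ℕ) :
    ∑ k ∈ Icc 1 n, ((shiftedLegendre n).coeff k : ℚ) * H2 k
      = -2 * (-1) ^ n * ∑ k ∈ Icc 1 n, (-1) ^ k / (k : ℚ) ^ 2 := by
  suffices hrange : ∑ k ∈ range (n + 1), ((shiftedLegendre n).coeff k : ℚ) * H2 k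
      = -2 * (-1) ^ n * ∑ k ∈ Icc 1 n, (-1) ^ k / (k : ℚ) ^ 2 by
    rw [← hrange, range_eq_Ico, sum_eq_sum_Ico_succ_bot n.succ_pos, zero_add,
      Nat.succ_eq_add_one, Ico_add_one_right_eq_Icc]
    simp [H2]
  induction n with
  | zero => simp [H2]
  | succ n ih =>
    have hstep := succ_sq_mul_sum_shiftedLegendre_add_mul_H2 n
    have htop : (shiftedLegendre n).coeff (n + 1) = 0 := by simp [coeff_shiftedLegendre]
    simp only [coeff_add, Int.cast_add, add_mul, sum_add_distrib] at hstep
    rw [sum_range_succ (fun k ↦ ((shiftedLegendre n).coeff k : ℚ) * H2 k), htop, ih] at hstep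
    rw [sum_Icc_succ_top (by lia)]
    have hsign : ((-1 : ℚ) ^ n) ^ 2 = 1 := by rw [← pow_mul', pow_mul]; norm_num
    refine mul_left_cancel₀ (show ((n : ℚ) + 1) ^ 2 ≠ 0 by positivity) ?_
    push_cast
    field_simp
    rw [pow_succ]
    linear_combination hstep + 2 * hsign

end HarmonicSum

section Euler

theorem sum_choose_mul_eulerNumber (n : ℕ) :
    ∑ j ∈ range (n + 1), (n.choose j * eulerNumber j) * (1 + (-1) ^ (n - j)) = 2 * 0 ^ n := by
  cases n with
  | zero => norm_num [eulerNumber]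
  | succ n =>
    have hterm (j : ℕ) (hj : j ∈ range (n + 1)) :
        ((n + 1).choose j * eulerNumber j) * (1 + (-1) ^ (n + 1 - j)) =
          2 * if Even (n + 1 - j) then ((n + 1).choose (n + 1 - j) : ℚ) * eulerNumber j else 0 := by
      rw [Nat.choose_symm (mem_range_le hj)]
      split_ifs with hparity
      · rw [hparity.neg_one_pow]; ring
      · rw [(Nat.not_even_iff_odd.mp hparity).neg_one_pow]; ring
    rw [sum_range_succ, sum_congr rfl hterm, ← mul_sum, ← sum_attach (range (n + 1)), eulerNumber]
    rw [zero_pow n.succ_ne_zero, Nat.choose_self, tsub_self, pow_zero]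
    push_cast
    ring

theorem exists_intCast_eq_eulerNumber (n : ℕ) : ∃ z : ℤ, (z : ℚ) = eulerNumber n := by
  suffices h : eulerNumber n ∈ (Int.castRingHom ℚ).range from h
  induction n using Nat.strong_induction_on with
  | _ n ih =>
    cases n with
    | zero => rw [eulerNumber]; exact one_mem _
    | succ n =>
      rw [eulerNumber]
      refine neg_mem (sum_mem fun j _ ↦ ?_)
      split_ifs
      · exact mul_mem (natCast_mem _ _) (ih j (mem_range.mp j.2))
      · exact zero_mem _

theorem padicNorm_eulerNumber_le_one {p : ℕ} [Fact p.Prime] (n : ℕ) :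
    padicNorm p (eulerNumber n) ≤ 1 := by
  obtain ⟨z, hz⟩ := exists_intCast_eq_eulerNumber n
  exact hz ▸ padicNorm.of_int z

/-- The Euler polynomial in the normalization `∑ j, C(m,j) E_j X^(m-j)`; in terms of the classical
Euler polynomial it is `2^m E_m((X+1)/2)`. -/
noncomputable def eulerPolynomial (m : ℕ) : ℚ[X] :=
  ∑ j ∈ range (m + 1), C (m.choose j * eulerNumber j) * X ^ (m - j)

theorem eval_eulerPolynomial (m : ℕ) (x : ℚ) :
    (eulerPolynomial m).eval x = ∑ j ∈ range (m + 1), m.choose j * eulerNumber j * x ^ (m - j) := by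
  simp [eulerPolynomial, eval_finsetSum]

theorem derivative_eulerPolynomial_succ (m : ℕ) :
    derivative (eulerPolynomial (m + 1)) = (m + 1 : ℕ) * eulerPolynomial m := by
  rw [eulerPolynomial, sum_range_succ, derivative_add, derivative_sum, eulerPolynomial, mul_sum]
  simp only [tsub_self, pow_zero, mul_one, derivative_C, add_zero]
  refine sum_congr rfl fun j _ ↦ ?_
  have hchoose : ((m.choose j : ℚ)) * (m + 1 : ℕ) = (m + 1).choose j * (m + 1 - j : ℕ) :=
    mod_cast m.choose_mul_succ_eq j
  rw [derivative_C_mul_X_pow, show m + 1 - j - 1 = m - j by lia, ← C_eq_natCast, ← mul_assoc,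
    ← C_mul]
  congr 2
  linear_combination -eulerNumber j * hchoose

theorem eulerPolynomial_comp_add (m : ℕ) :
    (eulerPolynomial m).comp (X + 1) + (eulerPolynomial m).comp (X - 1) = 2 * X ^ m := by
  induction m with
  | zero => norm_num [eulerPolynomial, eulerNumber]
  | succ m ih =>
    rw [← sub_eq_zero]
    set q := (eulerPolynomial (m + 1)).comp (X + 1) + (eulerPolynomial (m + 1)).comp (X - 1)
      - 2 * X ^ (m + 1) with hq
    have hderiv : derivative q = 0 := by
      calc derivative q
          = ((m : ℚ[X]) + 1) * ((eulerPolynomial m).comp (X + 1) + (eulerPolynomial m).comp (X - 1)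
              - 2 * X ^ m) := by
            simp only [hq, derivative_sub, derivative_comp, derivative_X,
              derivative_one, add_zero, sub_zero, one_mul, derivative_eulerPolynomial_succ,
              Nat.cast_add, Nat.cast_one, mul_comp, add_comp, natCast_comp, one_comp,
              derivative_mul, derivative_ofNat, zero_mul, zero_add, derivative_X_pow_succ,
              map_add, map_natCast, map_one]
            ring
        _ = 0 := by rw [ih, sub_self, mul_zero]
    have heval : q.eval 0 = 0 := by
      have := sum_choose_mul_eulerNumber (m + 1)
      simp only [mul_add, sum_add_distrib, mul_one] at this
      simp [hq, eval_comp, eval_eulerPolynomial, this]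
    rw [eq_C_of_derivative_eq_zero hderiv, coeff_zero_eq_eval_zero, heval, C_0]

theorem eval_add_one_add_eval_sub_one_eulerPolynomial (m : ℕ) (x : ℚ) :
    (eulerPolynomial m).eval (x + 1) + (eulerPolynomial m).eval (x - 1) = 2 * x ^ m := by
  simpa [eval_comp] using congrArg (eval x) (eulerPolynomial_comp_add m)

theorem four_mul_sum_neg_one_pow_mul_pow {m : ℕ} (hm : Even m) (hm₀ : m ≠ 0) (n : ℕ) :
    4 * ∑ k ∈ Icc 1 n, (-1) ^ k * (2 * k : ℚ) ^ m
      = (-1) ^ n * ((eulerPolynomial m).eval (2 * n + 1 : ℚ)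
        + (eulerPolynomial m).eval (-(2 * n + 1 : ℚ))) := by
  induction n with
  | zero =>
    have hzero := eval_add_one_add_eval_sub_one_eulerPolynomial m 0
    rw [zero_pow hm₀] at hzero
    simpa using hzero.symm
  | succ n ih =>
    have hpos := eval_add_one_add_eval_sub_one_eulerPolynomial m (2 * (n + 1))
    have hneg := eval_add_one_add_eval_sub_one_eulerPolynomial m (-(2 * (n + 1)))
    rw [show (2 * (n + 1) - 1 : ℚ) = 2 * n + 1 by ring] at hpos
    rw [show (-(2 * (n + 1)) + 1 : ℚ) = -(2 * n + 1) by ring, ← neg_add', hm.neg_pow] at hneg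
    rw [sum_Icc_succ_top (by lia), mul_add, ih, pow_succ]
    push_cast
    linear_combination (-1) ^ n * (hpos + hneg)

theorem ratModEq_eval_eulerPolynomial {p : ℕ} [Fact p.Prime] {z : ℤ} (hz : (p : ℤ) ∣ z) (m : ℕ) :
    ratModEq p ((eulerPolynomial m).eval (z : ℚ)) (eulerNumber m) := by
  rw [ratModEq_iff_padicNorm_sub_lt_one, eval_eulerPolynomial, sum_range_succ]
  simp only [Nat.choose_self, Nat.cast_one, one_mul, tsub_self, pow_zero, mul_one,
    add_sub_cancel_right]
  refine padicNorm.sum_lt' (fun j hj ↦ ?_) one_pos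
  have hpow : padicNorm p ((z : ℚ) ^ (m - j)) < 1 := by
    rw [IsAbsoluteValue.abv_pow (padicNorm p)]
    exact pow_lt_one₀ (padicNorm.nonneg _) ((padicNorm.int_lt_one_iff z).mpr hz)
      (Nat.sub_ne_zero_of_lt (mem_range.mp hj))
  rw [padicNorm.mul, padicNorm.mul]
  exact mul_lt_one_of_nonneg_of_lt_one_right
    (mul_le_one₀ (padicNorm.of_nat _) (padicNorm.nonneg _) (padicNorm_eulerNumber_le_one j))
    (padicNorm.nonneg _) hpow

theorem ratModEq_sum_neg_one_pow_div_sq {p n : ℕ} [Fact p.Prime] (hp : 3 < p)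
    (hn : p = 2 * n + 1) :
    ratModEq p (∑ k ∈ Icc 1 n, (-1) ^ k / (k : ℚ) ^ 2) ((-1) ^ n * (2 * eulerNumber (p - 3))) := by
  have hfermat : ratModEq p (∑ k ∈ Icc 1 n, (-1) ^ k / (k : ℚ) ^ 2)
      (4 * ∑ k ∈ Icc 1 n, (-1) ^ k * (2 * k : ℚ) ^ (p - 3)) := by
    rw [mul_sum]
    refine .sum fun k hk ↦ ?_
    have hk := mem_Icc.mp hk
    have hinv : ratModEq p (1 / (2 * k : ℕ) ^ 2) ((2 * k : ℕ) ^ (p - 3)) :=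
      ratModEq_one_div_pow (by lia) (by lia) (by lia)
    have hcoeff : padicNorm p (4 * (-1) ^ k) ≤ 1 := by
      exact_mod_cast padicNorm.of_int (p := p) (4 * (-1) ^ k)
    convert hinv.mul_left hcoeff using 1
    · push_cast; field_simp; norm_num
    · push_cast; ring
  have heuler : ratModEq p
      (4 * ∑ k ∈ Icc 1 n, (-1) ^ k * (2 * k : ℚ) ^ (p - 3))
      ((-1) ^ n * (2 * eulerNumber (p - 3))) := by
    rw [four_mul_sum_neg_one_pow_mul_pow ⟨n - 1, by lia⟩ (by lia), two_mul (eulerNumber _)]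
    have hpQ : (2 * n + 1 : ℚ) = (p : ℤ) := by rw [hn]; push_cast; ring
    rw [hpQ, ← Int.cast_neg]
    refine .mul_left (by exact_mod_cast padicNorm.of_int (p := p) ((-1) ^ n)) (.add ?_ ?_)
    · exact ratModEq_eval_eulerPolynomial dvd_rfl _
    · exact ratModEq_eval_eulerPolynomial (dvd_neg.mpr dvd_rfl) _
  exact hfermat.trans heuler

end Euler

theorem stmt19 (p : ℕ) (hp : p.Prime) (hp3 : 3 < p) :
    ratModEq p
      (∑ k ∈ Finset.Icc 1 ((p - 1) / 2), ((2 * k).choose k : ℚ) ^ 2 / 16 ^ k * H2 k)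
      (-4 * eulerNumber (p - 3)) := by
  have : Fact p.Prime := ⟨hp⟩
  obtain ⟨n, hn⟩ : Odd p := hp.odd_of_ne_two (by lia)
  rw [show (p - 1) / 2 = n by lia]
  have hlegendre : ratModEq p
      (∑ k ∈ Icc 1 n, ((2 * k).choose k : ℚ) ^ 2 / 16 ^ k * H2 k)
      (∑ k ∈ Icc 1 n, ((shiftedLegendre n).coeff k : ℚ) * H2 k) := by
    refine .sum fun k hk ↦ ?_
    have hkp : k < p := by have := mem_Icc.mp hk; lia
    rw [mul_comm _ (H2 k), mul_comm _ (H2 k)]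
    exact (ratModEq_centralBinom_sq_div hn hkp).mul_left (padicNorm_H2_le_one hkp)
  have hsign : (-1 : ℚ) ^ n * (-1) ^ n = 1 := by rw [← mul_pow]; norm_num
  have hcoeff : padicNorm p (-2 * (-1) ^ n) ≤ 1 := by
    exact_mod_cast padicNorm.of_int (p := p) (-2 * (-1) ^ n)
  rw [sum_coeff_shiftedLegendre_mul_H2] at hlegendre
  convert hlegendre.trans ((ratModEq_sum_neg_one_pow_div_sq hp3 hn).mul_left hcoeff) using 1
  linear_combination 4 * eulerNumber (p - 3) * hsign
end
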